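/- arXiv:math/0306390 — 3 statements merged into one kernel-verified Lean document; each statement's English description precedes it below -/
import Mathlib

section
/- Define μ : {(x₀,x₁,x₂,x₃) ∈ ℝ⁴ : (x₀,x₁) ≠ (0,0)} → ℂ by μ(x) = −(x₂ + i·x₃)/(x₀ − i·x₁). Then μ satisfies ∂_{q̄₁}μ − μ·∂_{q₂}μ = 0 and ∂_{q̄₂}μ + μ·∂_{q₁}μ = 0 on its domain, where ∂_{q₁} = ½(∂₀ − i∂₁), ∂_{q̄₁} = ½(∂₀ + i∂₁), ∂_{q₂} = ½(∂₂ − i∂₃), ∂_{q̄₂} = ½(∂₂ + i∂₃); consequently ∑ᵢ₌₀³ ∂²μ/∂xᵢ² = 0 and ∑ᵢ₌₀³ (∂μ/∂xᵢ)² = 0, i.e. μ is a harmonic morphism to ℂ. -/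
noncomputable section

/-- Partial derivative in the `i`-th coordinate direction of a map `ℝ⁴ → ℂ`. -/
def pd (i : Fin 4) (f : (Fin 4 → ℝ) → ℂ) (x : Fin 4 → ℝ) : ℂ :=
  fderiv ℝ f x (Pi.single i 1)

/-- The map `μ = −(x₂ + i x₃)/(x₀ − i x₁)` of Example 6.1 (restricted to `ℝ⁴`). -/
def muH (x : Fin 4 → ℝ) : ℂ :=
  -(((x 2 : ℂ) + Complex.I * (x 3 : ℂ)) / ((x 0 : ℂ) - Complex.I * (x 1 : ℂ)))

def auxW : (Fin 4 → ℝ) →L[ℝ] ℂ :=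
  Complex.ofRealCLM.comp (ContinuousLinearMap.proj 2)
    + Complex.I • Complex.ofRealCLM.comp (ContinuousLinearMap.proj 3)

def auxZ : (Fin 4 → ℝ) →L[ℝ] ℂ :=
  Complex.ofRealCLM.comp (ContinuousLinearMap.proj 0)
    - Complex.I • Complex.ofRealCLM.comp (ContinuousLinearMap.proj 1)

lemma auxW_apply (x : Fin 4 → ℝ) : auxW x = (x 2 : ℂ) + Complex.I * (x 3 : ℂ) := by
  simp [auxW]

lemma auxZ_apply (x : Fin 4 → ℝ) : auxZ x = (x 0 : ℂ) - Complex.I * (x 1 : ℂ) := by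
  simp [auxZ]

lemma auxZ_ne (x : Fin 4 → ℝ) (h : ¬(x 0 = 0 ∧ x 1 = 0)) : auxZ x ≠ 0 := by
  intro h0
  rw [auxZ_apply] at h0
  apply h
  have h1 := congrArg Complex.re h0
  have h2 := congrArg Complex.im h0
  simp at h1 h2
  exact ⟨h1, h2⟩

lemma pd_aux (i : Fin 4) (c d : ℂ) (n : ℕ) (x : Fin 4 → ℝ) (hz : auxZ x ≠ 0) :
    pd i (fun y => (c * auxW y + d) / auxZ y ^ n) x =
      (c * auxW (Pi.single i 1) * auxZ x ^ n
        - (c * auxW x + d) * (n * auxZ x ^ (n - 1) * auxZ (Pi.single i 1)))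
        / (auxZ x ^ n) ^ 2 := by
  have hd : DifferentiableAt ℝ (fun y => (c * auxW y + d) / auxZ y ^ n) x := by
    have hn : auxZ x ^ n ≠ 0 := pow_ne_zero _ hz
    have h1 : DifferentiableAt ℝ (fun y => c * auxW y + d) x := by fun_prop
    have h2 : DifferentiableAt ℝ (fun y => auxZ y ^ n) x := by fun_prop
    simp only [div_eq_mul_inv]
    exact h1.mul (h2.inv hn)
  unfold pd
  rw [← hd.lineDeriv_eq_fderiv]
  have hline (L : (Fin 4 → ℝ) →L[ℝ] ℂ) (v : Fin 4 → ℝ) :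
      HasDerivAt (fun t : ℝ => L (x + t • v)) (L v) 0 := by
    have := ((hasDerivAt_id (0 : ℝ)).smul_const v).const_add x
    have h2 := L.hasFDerivAt.comp_hasDerivAt (0 : ℝ) this
    rw [one_smul] at h2
    exact h2
  have hW := hline auxW (Pi.single i 1)
  have hZ := hline auxZ (Pi.single i 1)
  have key := ((hW.const_mul c).add_const d).fun_div (hZ.fun_pow n) (by simpa using pow_ne_zero n hz)
  simp only [zero_smul, add_zero] at key
  exact key.deriv

lemma muH_eq : muH = fun y => ((-1) * auxW y + 0) / auxZ y ^ 1 := by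
  funext y
  rw [auxW_apply, auxZ_apply, muH]
  ring

lemma pd_muH (i : Fin 4) (x : Fin 4 → ℝ) (hz : auxZ x ≠ 0) :
    pd i muH x = (auxZ (Pi.single i 1) * auxW x + 0) / auxZ x ^ 2
      + (0 * auxW x + -auxW (Pi.single i 1)) / auxZ x ^ 1 := by
  rw [muH_eq, pd_aux i _ _ _ x hz]
  field_simp
  simp
  ring

lemma diff_aux (c d : ℂ) (n : ℕ) (x : Fin 4 → ℝ) (hz : auxZ x ≠ 0) :
    DifferentiableAt ℝ (fun y => (c * auxW y + d) / auxZ y ^ n) x := by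
  have hn : auxZ x ^ n ≠ 0 := pow_ne_zero _ hz
  have h1 : DifferentiableAt ℝ (fun y => c * auxW y + d) x := by fun_prop
  have h2 : DifferentiableAt ℝ (fun y => auxZ y ^ n) x := by fun_prop
  simp only [div_eq_mul_inv]
  exact h1.mul (h2.inv hn)

lemma pd_pd_muH (i : Fin 4) (x : Fin 4 → ℝ) (hz : auxZ x ≠ 0) :
    pd i (pd i muH) x = 2 * auxZ (Pi.single i 1) * auxW (Pi.single i 1) / auxZ x ^ 2
      - 2 * auxZ (Pi.single i 1) ^ 2 * auxW x / auxZ x ^ 3 := by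
  have hev : pd i muH =ᶠ[nhds x]
      ((fun y => (auxZ (Pi.single i 1) * auxW y + 0) / auxZ y ^ 2)
      + (fun y => (0 * auxW y + -auxW (Pi.single i 1)) / auxZ y ^ 1)) := by
    filter_upwards [auxZ.continuous.continuousAt.eventually_ne hz] with y hy
    exact pd_muH i y hy
  have h1 := pd_aux i (auxZ (Pi.single i 1)) 0 2 x hz
  have h2 := pd_aux i 0 (-auxW (Pi.single i 1)) 1 x hz
  unfold pd at h1 h2
  rw [pd, hev.fderiv_eq, fderiv_add (diff_aux _ _ _ x hz) (diff_aux _ _ _ x hz),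
    ContinuousLinearMap.add_apply, h1, h2]
  field_simp
  simp
  ring

/-- Example 6.1 on `ℝ⁴`: `μ = −(x₂+ix₃)/(x₀−ix₁)` satisfies the Hermitian structure
equations on `{(x₀,x₁) ≠ (0,0)}`, and consequently is a harmonic morphism there. -/
theorem muH_hermitian_and_harmonic_morphism :
    ∀ x : Fin 4 → ℝ, ¬(x 0 = 0 ∧ x 1 = 0) →
      ((pd 0 muH x + Complex.I * pd 1 muH x) / 2
          - muH x * ((pd 2 muH x - Complex.I * pd 3 muH x) / 2) = 0) ∧
      ((pd 2 muH x + Complex.I * pd 3 muH x) / 2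
          + muH x * ((pd 0 muH x - Complex.I * pd 1 muH x) / 2) = 0) ∧
      (∑ i : Fin 4, pd i (pd i muH) x = 0) ∧
      (∑ i : Fin 4, (pd i muH x) ^ 2 = 0) := by
  intro x hx
  have hz := auxZ_ne x hx
  have hI := Complex.I_sq
  have hm : muH x = -auxW x / auxZ x := by rw [muH_eq]; simp
  simp only [Fin.sum_univ_four, pd_pd_muH _ x hz, pd_muH _ x hz, hm]
  have w0 : auxW (Pi.single 0 1) = 0 := by simp [auxW_apply]
  have w1 : auxW (Pi.single 1 1) = 0 := by simp [auxW_apply]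
  have w2 : auxW (Pi.single 2 1) = 1 := by simp [auxW_apply]
  have w3 : auxW (Pi.single 3 1) = Complex.I := by simp [auxW_apply]
  have z0 : auxZ (Pi.single 0 1) = 1 := by simp [auxZ_apply]
  have z1 : auxZ (Pi.single 1 1) = -Complex.I := by simp [auxZ_apply]
  have z2 : auxZ (Pi.single 2 1) = 0 := by simp [auxZ_apply]
  have z3 : auxZ (Pi.single 3 1) = 0 := by simp [auxZ_apply]
  simp only [w0, w1, w2, w3, z0, z1, z2, z3]
  refine ⟨?_, ?_, ?_, ?_⟩ <;> field_simp <;> ring_nf <;> simp only [hI] <;> ring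

end
end

section
/- Fix c, s ∈ ℝ and define f on A = {(x₁,x₂,x₃) ∈ ℝ³ : (x₂,x₃) ≠ (0,0)} by f(x₁,x₂,x₃) = ((x₁+c)² + x₂² + x₃² − s² + 2·i·(x₁+c)·s)/(x₂ + i·x₃). Then ∑ᵢ₌₁³ (∂f/∂xᵢ)² = 0 on A, i.e. f is a horizontally conformal map. -/
noncomputable section

/-- Partial derivative in the `i`-th coordinate direction of a map `ℝ³ → ℂ`;
coordinates on `ℝ³` are `(x₁, x₂, x₃)`. -/
def pd3 (i : Fin 3) (f : (Fin 3 → ℝ) → ℂ) (x : Fin 3 → ℝ) : ℂ :=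
  fderiv ℝ f x (Pi.single i 1)

/-- The map `f = ((x₁+c)² + x₂² + x₃² − s² + 2i(x₁+c)s)/(x₂ + i x₃)` of Example 15.1,
whose level curves are the circles of Villarceau (for `s ≠ 0`). -/
def villarceau (c s : ℝ) (x : Fin 3 → ℝ) : ℂ :=
  (((x 0 + c) ^ 2 + x 1 ^ 2 + x 2 ^ 2 - s ^ 2 : ℝ) +
      2 * Complex.I * ((x 0 + c : ℝ) : ℂ) * (s : ℂ)) /
    ((x 1 : ℂ) + Complex.I * (x 2 : ℂ))

/-- Example 15.1: the Villarceau map is horizontally conformal on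
`{(x₁,x₂,x₃) : (x₂,x₃) ≠ (0,0)}`. -/
theorem villarceau_horizontally_conformal (c s : ℝ) :
    ∀ x : Fin 3 → ℝ, ¬(x 1 = 0 ∧ x 2 = 0) →
      ∑ i : Fin 3, (pd3 i (villarceau c s) x) ^ 2 = 0 := by
  intro x hx
  have hz : (x 1 : ℂ) + Complex.I * (x 2 : ℂ) ≠ 0 := by
    intro h
    apply hx
    have h1 := congrArg Complex.re h
    have h2 := congrArg Complex.im h
    simp at h1 h2
    exact ⟨h1, h2⟩
  have hX : ∀ j : Fin 3, HasFDerivAt (fun y : Fin 3 → ℝ => ((y j : ℝ) : ℂ))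
      (Complex.ofRealCLM.comp (ContinuousLinearMap.proj (R := ℝ) (φ := fun _ : Fin 3 => ℝ) j)) x :=
    fun j => (Complex.ofRealCLM.comp
      (ContinuousLinearMap.proj (R := ℝ) (φ := fun _ : Fin 3 => ℝ) j)).hasFDerivAt
  have hW := (hX 0).add_const ((c : ℂ) + Complex.I * (s : ℂ))
  have hZ := (hX 1).add ((hX 2).const_mul Complex.I)
  have hN := ((hW.mul hW).add ((hX 1).mul (hX 1))).add ((hX 2).mul (hX 2))
  have hF := hN.mul ((hasDerivAt_inv hz).comp_hasFDerivAt x hZ)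
  have hf : ∀ y, villarceau c s y = (((y 0 : ℂ) + (c + Complex.I * s)) * ((y 0 : ℂ) + (c + Complex.I * s))
        + (y 1 : ℂ) * y 1 + (y 2 : ℂ) * y 2) * ((y 1 : ℂ) + Complex.I * y 2)⁻¹ := by
      intro y
      unfold villarceau
      rw [div_eq_mul_inv]
      congr 1
      push_cast
      linear_combination (-(s : ℂ) ^ 2) * Complex.I_sq
  have hF' := hF.congr_of_eventuallyEq (Filter.Eventually.of_forall hf)
  simp only [pd3, hF'.fderiv, Fin.sum_univ_three]
  simp [Pi.single_apply]
  field_simp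
  linear_combination ((((x 0 : ℂ) + (c + Complex.I * s)) ^ 2 + (x 1 : ℂ) ^ 2 + (x 2 : ℂ) ^ 2) ^ 2) * Complex.I_sq

end
end

section
/- Define φ on A = {(x₀,x₁,x₂,x₃) ∈ ℝ⁴ : (x₀,x₂,x₃) ≠ (0,0,0)} by φ(x₀,x₁,x₂,x₃) = −i·x₁ + √(x₀² + x₂² + x₃²). Then on A: x₀·(∑ᵢ₌₀³ ∂²φ/∂xᵢ²) − 2·∂φ/∂x₀ = 0 and ∑ᵢ₌₀³ (∂φ/∂xᵢ)² = 0. -/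
noncomputable section

/-- The map `φ = −i x₁ + √(x₀² + x₂² + x₃²)` of Example 13.8. -/
def phiSphere (x : Fin 4 → ℝ) : ℂ :=
  -Complex.I * (x 1 : ℂ) + (Real.sqrt (x 0 ^ 2 + x 2 ^ 2 + x 3 ^ 2) : ℂ)

lemma hasFDerivAt_rad (x : Fin 4 → ℝ) (hx : 0 < x 0 ^ 2 + x 2 ^ 2 + x 3 ^ 2) :
    HasFDerivAt (fun y : Fin 4 → ℝ => Real.sqrt (y 0 ^ 2 + y 2 ^ 2 + y 3 ^ 2))
      ((1 / Real.sqrt (x 0 ^ 2 + x 2 ^ 2 + x 3 ^ 2)) •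
        (x 0 • ContinuousLinearMap.proj (R := ℝ) (φ := fun _ : Fin 4 => ℝ) 0
          + x 2 • ContinuousLinearMap.proj (R := ℝ) (φ := fun _ : Fin 4 => ℝ) 2
          + x 3 • ContinuousLinearMap.proj (R := ℝ) (φ := fun _ : Fin 4 => ℝ) 3)) x := by
  have hp : ∀ i : Fin 4, HasFDerivAt (fun y : Fin 4 → ℝ => y i)
      (ContinuousLinearMap.proj (R := ℝ) (φ := fun _ : Fin 4 => ℝ) i) x :=
    fun i => hasFDerivAt_apply i x
  have h := ((((hp 0).pow 2).add ((hp 2).pow 2)).add ((hp 3).pow 2)).sqrt hx.ne'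
  refine h.congr_fderiv ?_
  have hr := (Real.sqrt_pos.2 hx).ne'
  ext v
  simp
  field_simp

/-- Partial derivative of a real valued map seen as complex valued. -/
lemma pd_ofReal (_i : Fin 4) (g : (Fin 4 → ℝ) → ℝ) (g' : (Fin 4 → ℝ) →L[ℝ] ℝ)
    (x : Fin 4 → ℝ) (h : HasFDerivAt g g' x) :
    HasFDerivAt (fun y => (g y : ℂ)) (Complex.ofRealCLM.comp g') x :=
  Complex.ofRealCLM.hasFDerivAt.comp x h

lemma pd_phi (x : Fin 4 → ℝ) (hx : 0 < x 0 ^ 2 + x 2 ^ 2 + x 3 ^ 2) (i : Fin 4) :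
    pd i phiSphere x = if i = 1 then -Complex.I else
      ((x i / Real.sqrt (x 0 ^ 2 + x 2 ^ 2 + x 3 ^ 2) : ℝ) : ℂ) := by
  have h1 := pd_ofReal i _ _ x (hasFDerivAt_rad x hx)
  have h2 := pd_ofReal i (fun y => y 1) _ x (hasFDerivAt_apply 1 x)
  have h3 : HasFDerivAt phiSphere _ x := (h2.const_mul (-Complex.I)).add h1
  rw [pd, h3.fderiv]
  fin_cases i <;> simp [div_eq_inv_mul]

lemma pd_pd_phi (x : Fin 4 → ℝ) (hx : 0 < x 0 ^ 2 + x 2 ^ 2 + x 3 ^ 2) (i : Fin 4) :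
    pd i (pd i phiSphere) x = if i = 1 then 0 else
      ((1 / Real.sqrt (x 0 ^ 2 + x 2 ^ 2 + x 3 ^ 2)
        - x i ^ 2 / Real.sqrt (x 0 ^ 2 + x 2 ^ 2 + x 3 ^ 2) ^ 3 : ℝ) : ℂ) := by
  have hev : ∀ᶠ y : Fin 4 → ℝ in nhds x, 0 < y 0 ^ 2 + y 2 ^ 2 + y 3 ^ 2 := by
    have hc : Continuous (fun y : Fin 4 → ℝ => y 0 ^ 2 + y 2 ^ 2 + y 3 ^ 2) := by fun_prop
    exact hc.continuousAt.eventually (lt_mem_nhds hx)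
  have he := hev.mono (fun y hy => pd_phi y hy i)
  have hr := (Real.sqrt_pos.2 hx).ne'
  rw [pd, Filter.EventuallyEq.fderiv_eq he]
  by_cases hi : i = 1
  · simp [hi]
  · simp only [hi, if_false]
    have h := pd_ofReal i (fun y => y i / Real.sqrt (y 0 ^ 2 + y 2 ^ 2 + y 3 ^ 2)) _ x
      (HasFDerivAt.mul (hasFDerivAt_apply (𝕜 := ℝ) i x)
        ((hasDerivAt_inv hr).comp_hasFDerivAt x (hasFDerivAt_rad x hx)))
    rw [h.fderiv]
    rw [ContinuousLinearMap.comp_apply, Complex.ofRealCLM_apply]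
    congr 1
    fin_cases i <;> simp at hi ⊢ <;> field_simp <;> ring

/-- Example 13.8: `φ = −i x₁ + √(x₀² + x₂² + x₃²)` satisfies the hyperbolic harmonic
morphism equations `x₀·∑ᵢ ∂²φ/∂xᵢ² − 2∂φ/∂x₀ = 0` and `∑ᵢ (∂φ/∂xᵢ)² = 0` on
`{(x₀,x₂,x₃) ≠ (0,0,0)}`. -/
theorem phiSphere_hyperbolic_harmonic_morphism :
    ∀ x : Fin 4 → ℝ, ¬(x 0 = 0 ∧ x 2 = 0 ∧ x 3 = 0) →
      ((x 0 : ℂ) * (∑ i : Fin 4, pd i (pd i phiSphere) x) - 2 * pd 0 phiSphere x = 0) ∧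
      (∑ i : Fin 4, (pd i phiSphere x) ^ 2 = 0) := by
  intro x hx0
  have hx : 0 < x 0 ^ 2 + x 2 ^ 2 + x 3 ^ 2 := by
    by_contra hn
    apply hx0
    refine ⟨?_, ?_, ?_⟩ <;> nlinarith [sq_nonneg (x 0), sq_nonneg (x 2), sq_nonneg (x 3)]
  have hr := (Real.sqrt_pos.2 hx).ne'
  have hs := Real.sq_sqrt hx.le
  simp only [Fin.sum_univ_four, pd_phi x hx, pd_pd_phi x hx]
  generalize Real.sqrt (x 0 ^ 2 + x 2 ^ 2 + x 3 ^ 2) = r at hr hs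
  simp only [Fin.reduceEq, if_true, if_false, zero_ne_one]
  constructor
  · have : x 0 * ((1 / r - x 0 ^ 2 / r ^ 3) + 0 + (1 / r - x 2 ^ 2 / r ^ 3)
        + (1 / r - x 3 ^ 2 / r ^ 3)) - 2 * (x 0 / r) = 0 := by
      field_simp
      linear_combination x 0 * hs
    exact_mod_cast this
  · have : (x 0 / r) ^ 2 + (-1) + (x 2 / r) ^ 2 + (x 3 / r) ^ 2 = 0 := by
      field_simp
      linear_combination -hs
    rw [neg_sq, Complex.I_sq]
    exact_mod_cast this

end
end
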